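/- arXiv:1910.07731 — 3 statements merged into one kernel-verified Lean document; each statement's English description precedes it below -/
import Mathlib

section
/- Let b be an effective dissipation coefficient on [0,∞). Then there exists a constant c ∈ (0,1] such that for every t ≥ 0 and every τ ∈ [0, t/2] one has c · B(t,0) ≤ B(t,τ) ≤ B(t,0), where B(t,τ) = ∫_τ^t dr/b(r). (Lemma 3.1, property (3.1): B(t,τ) ≈ B(t,0) for τ ∈ [0, t/2].) -/
/-!
The upper bound holds because `1 / b` is positive. For the lower bound it suffices, again by
positivity, to compare `∫ r in t/2..t, 1 / b r` with `∫ r in 0..t, 1 / b r`.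

If `b` is decreasing, then `1 / b` is increasing and the second half of `[0, t]` carries at least
half of the integral. If `b` is increasing, then the second half carries at least
`(t / 2) / b t`; and since `(r / b r)' = (b r - r * b' r) / (b r)² ≥ (1 - a) / b r`, integration
gives `(1 - a) * ∫ r in 0..t, 1 / b r ≤ t / b t` (`integral_le_div`). So `c = (1 - a) / 2` works in
both cases.
-/

open MeasureTheory Filter

/-- `b` is an effective dissipation coefficient on `[0,∞)`:
`b` is positive and monotonic, `t·b(t) → ∞`, `((1+t)²b(t))⁻¹` is integrable on `(0,∞)`,
`b ∈ C³` with `|b⁽ᵏ⁾(t)| ≤ C·b(t)/(1+t)ᵏ` for `k = 1,2,3`, `1/b` is not integrable on `(0,∞)`,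
and `t·b'(t) ≤ a·b(t)` for some `a ∈ [0,1)`. -/
def EffectiveDissipation (b : ℝ → ℝ) : Prop :=
  (∀ t, 0 ≤ t → 0 < b t) ∧
  (MonotoneOn b (Set.Ici 0) ∨ AntitoneOn b (Set.Ici 0)) ∧
  Tendsto (fun t => t * b t) atTop atTop ∧
  IntegrableOn (fun t => ((1 + t) ^ 2 * b t)⁻¹) (Set.Ioi 0) ∧
  ContDiffOn ℝ 3 b (Set.Ici 0) ∧
  (∃ C > 0, ∀ k ∈ ({1, 2, 3} : Set ℕ), ∀ t, 0 ≤ t →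
    |iteratedDerivWithin k b (Set.Ici 0) t| ≤ C * b t / (1 + t) ^ k) ∧
  ¬ IntegrableOn (fun t => 1 / b t) (Set.Ioi 0) ∧
  (∃ a, 0 ≤ a ∧ a < 1 ∧ ∀ t, 0 ≤ t → t * derivWithin b (Set.Ici 0) t ≤ a * b t)

/-- The bound `t * b' t ≤ a * b t` in integrated form, obtained from the derivative of
`r ↦ r / b r`. -/
theorem integral_le_div {b : ℝ → ℝ} {a t : ℝ} (hpos : ∀ t, 0 ≤ t → 0 < b t)
    (hdiff : DifferentiableOn ℝ b (Set.Ici 0))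
    (ha : ∀ t, 0 ≤ t → t * derivWithin b (Set.Ici 0) t ≤ a * b t) (ht : 0 ≤ t) :
    (1 - a) * ∫ r in (0:ℝ)..t, 1 / b r ≤ t / b t := by
  have hsub : Set.Icc 0 t ⊆ Set.Ici (0:ℝ) := fun x hx => hx.1
  have hc : ContinuousOn b (Set.Icc 0 t) := hdiff.continuousOn.mono hsub
  have hne : ∀ x ∈ Set.Icc 0 t, b x ≠ 0 := fun x hx => (hpos x hx.1).ne'
  have key := intervalIntegral.integral_le_sub_of_hasDeriv_right_of_le ht
    (g := fun r => r / b r) (φ := fun r => (1 - a) * (1 / b r))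
    (g' := fun r => (1 * b r - r * derivWithin b (Set.Ici 0) r) / b r ^ 2)
    (continuousOn_id.div hc hne)
    (fun x hx => by
      have h := (hdiff x hx.1.le).hasDerivWithinAt.mono
        (fun y (hy : x < y) => (hx.1.trans hy).le : Set.Ioi x ⊆ Set.Ici 0)
      exact (hasDerivWithinAt_id x _).div h (hpos x hx.1.le).ne')
    ((continuousOn_const.mul (continuousOn_const.div hc hne)).integrableOn_Icc)
    (fun x hx => by
      have hx0 := hpos x hx.1.le
      have e : (1 - a) * (1 / b x) = (b x - a * b x) / b x ^ 2 := by
        field_simp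
      rw [e, one_mul]
      exact div_le_div_of_nonneg_right (sub_le_sub_left (ha x hx.1.le) _) (sq_nonneg _))
  rw [intervalIntegral.integral_const_mul] at key
  simpa using key

/-- Lemma 3.1, property (3.1): `B(t,τ) ≈ B(t,0)` for `τ ∈ [0, t/2]`,
where `B(t,τ) = ∫_τ^t dr/b(r)`. -/
theorem stmt0 (b : ℝ → ℝ) (hb : EffectiveDissipation b) :
    ∃ c : ℝ, 0 < c ∧ c ≤ 1 ∧ ∀ t, 0 ≤ t → ∀ τ, 0 ≤ τ → τ ≤ t / 2 →
      c * ∫ r in (0:ℝ)..t, 1 / b r ≤ (∫ r in τ..t, 1 / b r) ∧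
      (∫ r in τ..t, 1 / b r) ≤ ∫ r in (0:ℝ)..t, 1 / b r := by
  obtain ⟨hpos, hmono, -, -, hcd, -, -, a, ha0, ha1, ha⟩ := hb
  have hdiff : DifferentiableOn ℝ b (Set.Ici 0) := hcd.differentiableOn (by norm_num)
  have hint : ∀ x y, 0 ≤ x → 0 ≤ y → IntervalIntegrable (fun r => 1 / b r) volume x y := by
    intro x y hx hy
    have hsub : Set.uIcc x y ⊆ Set.Ici (0:ℝ) := fun z hz => (le_min hx hy).trans hz.1
    exact (continuousOn_const.div (hdiff.continuousOn.mono hsub)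
      (fun z hz => (hpos z (hsub hz)).ne')).intervalIntegrable
  have hnn : ∀ x y, 0 ≤ x → x ≤ y → 0 ≤ ∫ r in x..y, 1 / b r := fun x y hx hxy =>
    intervalIntegral.integral_nonneg hxy
      (fun u hu => (one_div_pos.2 (hpos u (hx.trans hu.1))).le)
  refine ⟨(1 - a) / 2, by linarith, by linarith, fun t ht τ hτ hτt => ?_⟩
  have hs : 0 ≤ t / 2 := by linarith
  have hst : t / 2 ≤ t := by linarith
  have e1 := intervalIntegral.integral_add_adjacent_intervals (hint 0 τ le_rfl hτ) (hint τ t hτ ht)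
  have e2 := intervalIntegral.integral_add_adjacent_intervals
    (hint τ (t / 2) hτ hs) (hint (t / 2) t hs ht)
  have e3 := intervalIntegral.integral_add_adjacent_intervals
    (hint 0 (t / 2) le_rfl hs) (hint (t / 2) t hs ht)
  have n1 := hnn 0 τ le_rfl hτ
  have n2 := hnn τ (t / 2) hτ hτt
  have n3 := hnn 0 t le_rfl ht
  refine ⟨?_, by linarith⟩
  suffices h : (1 - a) / 2 * ∫ r in (0:ℝ)..t, 1 / b r ≤ ∫ r in (t / 2)..t, 1 / b r by linarith
  rcases hmono with hm | hm
  · have h1 := integral_le_div hpos hdiff ha ht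
    have h2 : ∫ _ in (t / 2)..t, 1 / b t ≤ ∫ r in (t / 2)..t, 1 / b r :=
      intervalIntegral.integral_mono_on hst intervalIntegrable_const (hint _ _ hs ht)
        (fun x hx => one_div_le_one_div_of_le (hpos x (hs.trans hx.1))
          (hm (hs.trans hx.1) ht hx.2))
    have h3 : ∫ _ in (t / 2)..t, 1 / b t = t / b t / 2 := by
      rw [intervalIntegral.integral_const, smul_eq_mul]; ring
    linarith
  -- Both halves are compared with the constant `1 / b (t / 2)`.
  · have h1 : ∫ r in (0:ℝ)..(t / 2), 1 / b r ≤ ∫ _ in (0:ℝ)..(t / 2), 1 / b (t / 2) :=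
      intervalIntegral.integral_mono_on hs (hint _ _ le_rfl hs) intervalIntegrable_const
        (fun x hx => one_div_le_one_div_of_le (hpos _ hs) (hm hx.1 hs hx.2))
    have h2 : ∫ _ in (t / 2)..t, 1 / b (t / 2) ≤ ∫ r in (t / 2)..t, 1 / b r :=
      intervalIntegral.integral_mono_on hst intervalIntegrable_const (hint _ _ hs ht)
        (fun x hx => one_div_le_one_div_of_le (hpos x (hs.trans hx.1))
          (hm hs (hs.trans hx.1) hx.1))
    rw [intervalIntegral.integral_const, smul_eq_mul] at h1 h2
    have h3 : (t - t / 2) * (1 / b (t / 2)) = (t / 2 - 0) * (1 / b (t / 2)) := by ring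
    have h4 := mul_nonneg ha0 n3
    linarith
end

section
/- Let b be an effective dissipation coefficient on [0,∞). Then there exists a constant c ∈ (0,1] such that for every t ≥ 0 and every τ ∈ [t/2, t] one has c · B(t,0) ≤ B(τ,0) ≤ B(t,0), where B(t,τ) = ∫_τ^t dr/b(r). (Lemma 3.1, property (3.2): B(τ,0) ≈ B(t,0) for τ ∈ [t/2, t].) -/
/-!
The bound `|b'| ≤ C b / (1 + t)` makes `b(t) (1 + t) ^ N` nondecreasing for any natural `N ≥ C`,
whence the doubling inequality `b(s) ≤ 2 ^ N b(2 s)`. Substituting `r = 2 s` in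
`B(t,0) = ∫_0^t dr / b(r)` then gives `B(t,0) ≤ 2 * 2 ^ N * B(t/2,0)`. Since `b > 0`, the map
`τ ↦ B(τ,0)` is nondecreasing, so both inequalities for `τ ∈ [t/2, t]` follow.
-/

open MeasureTheory Filter

/-- Doubling inequality, from the monotonicity of `b(t) (1 + t) ^ N` for `N` at least the
constant in the first-derivative bound. -/
theorem EffectiveDissipation.exists_doubling {b : ℝ → ℝ} (hb : EffectiveDissipation b) :
    ∃ N : ℕ, ∀ s, 0 ≤ s → b s ≤ 2 ^ N * b (2 * s) := by
  obtain ⟨hpos, -, -, -, hC3, ⟨C, -, hC⟩, -, -⟩ := hb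
  obtain ⟨N, hN⟩ := exists_nat_ge C
  refine ⟨N, fun s hs => ?_⟩
  have hmono : MonotoneOn (fun t => b t * (1 + t) ^ N) (Set.Ici 0) := by
    have hcont : ContinuousOn (fun t => b t * (1 + t) ^ N) (Set.Ici 0) :=
      hC3.continuousOn.mul (by fun_prop)
    have hder : ∀ t ∈ interior (Set.Ici (0 : ℝ)),
        HasDerivAt (fun t => b t * (1 + t) ^ N)
          (derivWithin b (Set.Ici 0) t * (1 + t) ^ N
            + b t * (N * (1 + t) ^ (N - 1) * 1)) t := by
      intro t ht
      rw [interior_Ici] at ht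
      have hd := ((hC3.differentiableOn (by norm_num)) t
        (Set.Ioi_subset_Ici_self ht)).hasDerivWithinAt.hasDerivAt (Ici_mem_nhds ht)
      exact hd.mul (((hasDerivAt_id t).const_add 1).pow N)
    refine monotoneOn_of_hasDerivWithinAt_nonneg (convex_Ici 0) hcont
      (fun t ht => (hder t ht).hasDerivWithinAt) fun t ht => ?_
    rw [interior_Ici] at ht
    have ht0 : (0 : ℝ) < t := ht
    have h1t : 0 < 1 + t := by linarith
    have hbt := hpos t ht0.le
    have hd := hC 1 (by simp) t ht0.le
    rw [iteratedDerivWithin_one, pow_one] at hd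
    have hlow : -(N * b t / (1 + t)) ≤ derivWithin b (Set.Ici 0) t := by
      have h2 : C * b t / (1 + t) ≤ N * b t / (1 + t) := by gcongr
      linarith [(abs_le.mp hd).1]
    -- At `N = 0` the exponent `N - 1` is truncated, but then the factor `N` vanishes.
    have hpow : (N : ℝ) * (1 + t) ^ (N - 1) * (1 + t) = N * (1 + t) ^ N := by
      rcases N with _ | n
      · simp
      · simp [pow_succ, mul_assoc]
    have heq : b t * (N * (1 + t) ^ (N - 1) * 1) = N * b t / (1 + t) * (1 + t) ^ N := by
      field_simp
      linear_combination hpow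
    rw [heq, ← add_mul]
    exact mul_nonneg (by linarith) (by positivity)
  have h := hmono (Set.mem_Ici.mpr hs) (Set.mem_Ici.mpr (by linarith : 0 ≤ 2 * s))
    (by linarith : s ≤ 2 * s)
  have hb2 := hpos (2 * s) (by linarith)
  have h3 : (1 + 2 * s) ^ N ≤ 2 ^ N * (1 + s) ^ N := by
    rw [← mul_pow]
    gcongr
    linarith
  have hp : 0 < (1 + s) ^ N := by positivity
  refine le_of_mul_le_mul_right ?_ hp
  calc b s * (1 + s) ^ N ≤ b (2 * s) * (1 + 2 * s) ^ N := h
    _ ≤ b (2 * s) * (2 ^ N * (1 + s) ^ N) := by gcongr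
    _ = 2 ^ N * b (2 * s) * (1 + s) ^ N := by ring

/-- Lemma 3.1, property (3.2): `B(τ,0) ≈ B(t,0)` for `τ ∈ [t/2, t]`,
where `B(t,τ) = ∫_τ^t dr/b(r)`. -/
theorem stmt1 (b : ℝ → ℝ) (hb : EffectiveDissipation b) :
    ∃ c : ℝ, 0 < c ∧ c ≤ 1 ∧ ∀ t, 0 ≤ t → ∀ τ, t / 2 ≤ τ → τ ≤ t →
      c * ∫ r in (0:ℝ)..t, 1 / b r ≤ (∫ r in (0:ℝ)..τ, 1 / b r) ∧
      (∫ r in (0:ℝ)..τ, 1 / b r) ≤ ∫ r in (0:ℝ)..t, 1 / b r := by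
  obtain ⟨N, hN⟩ := hb.exists_doubling
  obtain ⟨hpos, -, -, -, hC3, -, -, -⟩ := hb
  have hcont : ContinuousOn (fun r => 1 / b r) (Set.Ici 0) :=
    continuousOn_const.div hC3.continuousOn fun r hr => (hpos r hr).ne'
  have hint : ∀ x y, 0 ≤ x → 0 ≤ y →
      IntervalIntegrable (fun r => 1 / b r) volume x y := fun x y hx hy =>
    (hcont.mono fun _ hr => le_trans (le_min hx hy) hr.1).intervalIntegrable
  have hmono : ∀ x y, 0 ≤ x → x ≤ y →
      ∫ r in (0:ℝ)..x, 1 / b r ≤ ∫ r in (0:ℝ)..y, 1 / b r := by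
    intro x y hx hxy
    rw [← intervalIntegral.integral_add_adjacent_intervals
      (hint 0 x le_rfl hx) (hint x y hx (hx.trans hxy))]
    exact le_add_of_nonneg_right (intervalIntegral.integral_nonneg hxy fun r hr =>
      (one_div_pos.mpr (hpos r (hx.trans hr.1))).le)
  have hhalf : ∀ t, 0 ≤ t →
      ∫ r in (0:ℝ)..t, 1 / b r ≤ 2 * 2 ^ N * ∫ r in (0:ℝ)..(t / 2), 1 / b r := by
    intro t ht
    have hsub : ∫ r in (0:ℝ)..t, 1 / b r = 2 * ∫ s in (0:ℝ)..(t / 2), 1 / b (2 * s) := by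
      rw [intervalIntegral.mul_integral_comp_mul_left (f := fun r => 1 / b r)]
      congr 1 <;> ring
    rw [hsub, mul_assoc, ← intervalIntegral.integral_const_mul (2 ^ N)]
    refine mul_le_mul_of_nonneg_left ?_ zero_le_two
    refine intervalIntegral.integral_mono_on (by linarith) ?_
      ((hint 0 (t / 2) le_rfl (by linarith)).const_mul _) fun s hs => ?_
    · refine ContinuousOn.intervalIntegrable_of_Icc (by linarith) ?_
      exact hcont.comp (f := fun s => 2 * s) (by fun_prop) fun s hs =>
        Set.mem_Ici.mpr (by linarith [hs.1])
    · have hb1 := hpos s hs.1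
      have hb2 := hpos (2 * s) (by linarith [hs.1])
      rw [mul_one_div, div_le_div_iff₀ hb2 hb1, one_mul]
      exact hN s hs.1
  have hK : (1 : ℝ) ≤ 2 * 2 ^ N := by
    linarith [one_le_pow₀ (one_le_two : (1 : ℝ) ≤ 2) (n := N)]
  refine ⟨(2 * 2 ^ N)⁻¹, by positivity, inv_le_one_of_one_le₀ hK, fun t ht τ h1 h2 => ⟨?_, ?_⟩⟩
  · rw [inv_mul_le_iff₀ (by positivity)]
    exact (hhalf t ht).trans
      (mul_le_mul_of_nonneg_left (hmono _ _ (by linarith) h1) (by positivity))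
  · exact hmono τ t (by linarith) h2
end

section
/- Let μ > 0, γ > 0 and r ∈ (−1, 1). Then there exists a constant c₀ > 1 such that for every c ≥ c₀ the function b(t) = μ (1+t)^{−r} (log(c+t))^{γ}, t ≥ 0, is an effective dissipation coefficient; that is: b is positive and monotone on [0,∞); t·b(t) → ∞ as t → ∞; t ↦ ((1+t)²b(t))^{-1} is integrable on (0,∞); b is of class C³ and there is a constant C > 0 such that |b^{(k)}(t)| ≤ C·b(t)/(1+t)^k for k = 1,2,3 and all t ≥ 0; 1/b is not integrable on (0,∞); and there exists a ∈ [0,1) with t·b'(t) ≤ a·b(t) for all t ≥ 0. -/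
/-!
Write `u = 1 + t`, `x = c + t`, `L = log (c + t)`. The function `b = μ u^(-r) L^γ` satisfies
`b' = b w` with the logarithmic derivative `w = -r / u + γ / (x L)`, hence
`b'' = b (w' + w²)` and `b''' = b (w'' + 3 w w' + w³)`. As soon as `c ≥ 1` and `log c ≥ 1`, one has
`x ≥ u` and `L ≥ 1`, so that `w⁽ʲ⁾ = O(u^(-1-j))`, which gives the symbol estimates
(`abs_iteratedDerivWithin_dissip_le`).

Both the monotonicity and the bound `t b' ≤ a b` are statements about `w`. Since
`0 ≤ γ / (x L) ≤ (γ / log c) / u`, taking `log c` larger than `γ / |r|` makes `w` have the sign of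
`-r`, and taking it larger than `2 γ / (1 - |r|)` gives `t w ≤ (1 + |r|) / 2 < 1`.

The growth and integrability conditions come from comparison with powers of `u`: `L^γ ≥ 1` handles
`t b → ∞` (as `1 - r > 0`) and the integrability of `1 / (u² b)` (as `r - 2 < -1`), while
`L^γ ≤ K u^(r+1)`, because logarithms grow slower than any power, shows `1 / b ≥ const / u`, which
is not integrable.
-/

open MeasureTheory Filter

/-! ### The coefficient and its logarithmic derivative -/

/-- The coefficient `b(t) = μ (1+t)^{-r} (log (c+t))^γ`. -/
noncomputable def dissip (μ γ r c : ℝ) : ℝ → ℝ :=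
  fun t => μ * (1 + t) ^ (-r) * Real.log (c + t) ^ γ

/-- The logarithmic derivative `b' / b` of `dissip`. -/
noncomputable def logDer (γ r c t : ℝ) : ℝ := -r / (1 + t) + γ / ((c + t) * Real.log (c + t))

/-- The first derivative of `logDer`. -/
noncomputable def logDer₁ (γ r c t : ℝ) : ℝ :=
  r / (1 + t) ^ 2 - γ / (c + t) ^ 2 * (1 / Real.log (c + t) + 1 / Real.log (c + t) ^ 2)

/-- The second derivative of `logDer`. -/
noncomputable def logDer₂ (γ r c t : ℝ) : ℝ :=
  -2 * r / (1 + t) ^ 3 + γ / (c + t) ^ 3 *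
    (2 / Real.log (c + t) + 3 / Real.log (c + t) ^ 2 + 2 / Real.log (c + t) ^ 3)

section Dissip

variable {μ γ r c t : ℝ}

lemma one_le_log_add (hc : 1 < c) (hl : 1 ≤ Real.log c) (ht : 0 ≤ t) :
    1 ≤ Real.log (c + t) :=
  hl.trans (Real.log_le_log (by linarith) (by linarith))

lemma dissip_pos (hμ : 0 < μ) (hc : 1 < c) (ht : 0 ≤ t) : 0 < dissip μ γ r c t := by
  have hL : 0 < Real.log (c + t) := Real.log_pos (by linarith)
  have hu : 0 < 1 + t := by linarith
  unfold dissip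
  positivity

lemma hasDerivAt_log_add (hc : 1 < c) (ht : 0 ≤ t) :
    HasDerivAt (fun s => Real.log (c + s)) (1 / (c + t)) t :=
  ((hasDerivAt_id t).const_add c).log (by simp only [id]; linarith)

lemma hasDerivAt_dissip (hc : 1 < c) (ht : 0 ≤ t) :
    HasDerivAt (dissip μ γ r c) (dissip μ γ r c t * logDer γ r c t) t := by
  have hL : 0 < Real.log (c + t) := Real.log_pos (by linarith)
  have hu : 0 < 1 + t := by linarith
  have hx : 0 < c + t := by linarith
  have h1 : HasDerivAt (fun s : ℝ => 1 + s) 1 t := (hasDerivAt_id t).const_add 1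
  have h := ((h1.rpow_const (p := -r) (Or.inl hu.ne')).const_mul μ).mul
    ((hasDerivAt_log_add hc ht).rpow_const (p := γ) (Or.inl hL.ne'))
  refine h.congr_deriv ?_
  rw [Real.rpow_sub_one hu.ne', Real.rpow_sub_one hL.ne']
  unfold dissip logDer
  field_simp

lemma hasDerivAt_logDer (hc : 1 < c) (ht : 0 ≤ t) :
    HasDerivAt (logDer γ r c) (logDer₁ γ r c t) t := by
  have hL : 0 < Real.log (c + t) := Real.log_pos (by linarith)
  have hu : 0 < 1 + t := by linarith
  have hx : 0 < c + t := by linarith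
  have h1 : HasDerivAt (fun s : ℝ => 1 + s) 1 t := (hasDerivAt_id t).const_add 1
  have h2 : HasDerivAt (fun s : ℝ => c + s) 1 t := (hasDerivAt_id t).const_add c
  have h := ((hasDerivAt_const t (-r)).div h1 hu.ne').add
    ((hasDerivAt_const t γ).div (h2.mul (hasDerivAt_log_add hc ht)) (mul_pos hx hL).ne')
  refine h.congr_deriv ?_
  unfold logDer₁
  simp only [Pi.mul_apply]
  field_simp
  ring

lemma hasDerivAt_logDer₁ (hc : 1 < c) (ht : 0 ≤ t) :
    HasDerivAt (logDer₁ γ r c) (logDer₂ γ r c t) t := by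
  have hL : 0 < Real.log (c + t) := Real.log_pos (by linarith)
  have hu : 0 < 1 + t := by linarith
  have hx : 0 < c + t := by linarith
  have h1 : HasDerivAt (fun s : ℝ => 1 + s) 1 t := (hasDerivAt_id t).const_add 1
  have h2 : HasDerivAt (fun s : ℝ => c + s) 1 t := (hasDerivAt_id t).const_add c
  have h3 := hasDerivAt_log_add hc ht
  have h := ((hasDerivAt_const t r).div (h1.pow 2) (pow_pos hu 2).ne').sub
    (((hasDerivAt_const t γ).div (h2.pow 2) (pow_pos hx 2).ne').mul
      (((hasDerivAt_const t (1 : ℝ)).div h3 hL.ne').add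
        ((hasDerivAt_const t (1 : ℝ)).div (h3.pow 2) (pow_pos hL 2).ne')))
  refine h.congr_deriv ?_
  unfold logDer₂
  simp only [Pi.pow_apply, Pi.add_apply, Pi.div_apply]
  field_simp
  ring

/-! ### Symbol estimates -/

lemma derivWithin_of_forall {f f' : ℝ → ℝ} (h : ∀ s, 0 ≤ s → HasDerivAt f (f' s) s)
    (ht : 0 ≤ t) : derivWithin f (Set.Ici 0) t = f' t :=
  (h t ht).hasDerivWithinAt.derivWithin (uniqueDiffOn_Ici 0 t ht)

lemma iteratedDerivWithin_succ_of_forall {n : ℕ} {f g g' : ℝ → ℝ}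
    (hg : ∀ s, 0 ≤ s → iteratedDerivWithin n f (Set.Ici 0) s = g s)
    (h : ∀ s, 0 ≤ s → HasDerivAt g (g' s) s) (ht : 0 ≤ t) :
    iteratedDerivWithin (n + 1) f (Set.Ici 0) t = g' t := by
  rw [iteratedDerivWithin_succ, derivWithin_congr (s := Set.Ici 0) hg (hg t ht), derivWithin_of_forall h ht]

lemma abs_const_div_pow_le {γ p : ℝ} (hγ : 0 < γ) (n : ℕ) (hc : 1 < c) (ht : 0 ≤ t)
    {K : ℝ} (h0 : 0 ≤ p) (hp : p ≤ K) :
    |γ / (c + t) ^ n * p| ≤ γ * K / (1 + t) ^ n := by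
  have hu : 0 < 1 + t := by linarith
  have hx : 0 < c + t := by linarith
  have hK : 0 ≤ K := h0.trans hp
  rw [abs_of_nonneg (by positivity), div_mul_eq_mul_div]
  gcongr

lemma one_div_log_pow_le (hc : 1 < c) (hl : 1 ≤ Real.log c) (ht : 0 ≤ t) (n : ℕ) :
    0 ≤ 1 / Real.log (c + t) ^ n ∧ 1 / Real.log (c + t) ^ n ≤ 1 := by
  have hL := one_le_log_add hc hl ht
  have hp : 1 ≤ Real.log (c + t) ^ n := one_le_pow₀ hL
  exact ⟨by positivity, by rw [div_le_one (by positivity)]; exact hp⟩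

lemma abs_logDer_le (hγ : 0 < γ) (hc : 1 < c) (hl : 1 ≤ Real.log c) (ht : 0 ≤ t) :
    |logDer γ r c t| ≤ (|r| + γ) / (1 + t) := by
  have hu : 0 < 1 + t := by linarith
  have hp := one_div_log_pow_le hc hl ht 1
  have h := abs_const_div_pow_le hγ 1 hc ht hp.1 hp.2
  have e : logDer γ r c t = -r / (1 + t) + γ / (c + t) ^ 1 * (1 / Real.log (c + t) ^ 1) := by
    unfold logDer
    rw [pow_one, pow_one, div_mul_div_comm, mul_one]
  rw [e]
  refine (abs_add_le _ _).trans ?_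
  rw [abs_div, abs_neg, abs_of_pos hu, add_div]
  simpa using h

lemma abs_logDer₁_le (hγ : 0 < γ) (hc : 1 < c) (hl : 1 ≤ Real.log c) (ht : 0 ≤ t) :
    |logDer₁ γ r c t| ≤ (|r| + γ * 2) / (1 + t) ^ 2 := by
  have hu : 0 < 1 + t := by linarith
  have hp1 := one_div_log_pow_le hc hl ht 1
  have hp2 := one_div_log_pow_le hc hl ht 2
  rw [pow_one] at hp1
  have h := abs_const_div_pow_le hγ 2 hc ht (K := 2) (add_nonneg hp1.1 hp2.1)
    (by linarith [hp1.2, hp2.2])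
  refine (abs_sub _ _).trans ?_
  rw [abs_div, abs_of_pos (pow_pos hu 2), add_div]
  gcongr

lemma abs_logDer₂_le (hγ : 0 < γ) (hc : 1 < c) (hl : 1 ≤ Real.log c) (ht : 0 ≤ t) :
    |logDer₂ γ r c t| ≤ (2 * |r| + γ * 7) / (1 + t) ^ 3 := by
  have hu : 0 < 1 + t := by linarith
  obtain ⟨h1, h1'⟩ := one_div_log_pow_le hc hl ht 1
  obtain ⟨h2, h2'⟩ := one_div_log_pow_le hc hl ht 2
  obtain ⟨h3, h3'⟩ := one_div_log_pow_le hc hl ht 3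
  rw [pow_one] at h1 h1'
  have e : 2 / Real.log (c + t) + 3 / Real.log (c + t) ^ 2 + 2 / Real.log (c + t) ^ 3 =
      2 * (1 / Real.log (c + t)) + 3 * (1 / Real.log (c + t) ^ 2) +
        2 * (1 / Real.log (c + t) ^ 3) := by ring
  have h := abs_const_div_pow_le hγ 3 hc ht (K := 7)
    (p := 2 / Real.log (c + t) + 3 / Real.log (c + t) ^ 2 + 2 / Real.log (c + t) ^ 3)
    (by rw [e]; linarith) (by rw [e]; linarith)
  refine (abs_add_le _ _).trans ?_
  rw [abs_div, abs_of_pos (pow_pos hu 3), add_div, abs_mul]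
  norm_num
  simpa using h

/-- The symbol estimates. The constant obtained in the proof depends only on `γ` and `r`. -/
lemma abs_iteratedDerivWithin_dissip_le (hμ : 0 < μ) (hγ : 0 < γ) (hc : 1 < c)
    (hl : 1 ≤ Real.log c) :
    ∃ C > 0, ∀ k ∈ ({1, 2, 3} : Set ℕ), ∀ t, 0 ≤ t →
      |iteratedDerivWithin k (dissip μ γ r c) (Set.Ici 0) t|
        ≤ C * dissip μ γ r c t / (1 + t) ^ k := by
  have e0 : ∀ s, 0 ≤ s → iteratedDerivWithin 0 (dissip μ γ r c) (Set.Ici 0) s =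
      dissip μ γ r c s := fun s _ => by simp
  have e1 : ∀ s, 0 ≤ s → iteratedDerivWithin 1 (dissip μ γ r c) (Set.Ici 0) s =
      dissip μ γ r c s * logDer γ r c s := fun s hs =>
    iteratedDerivWithin_succ_of_forall e0 (fun s hs => hasDerivAt_dissip hc hs) hs
  have e2 : ∀ s, 0 ≤ s → iteratedDerivWithin 2 (dissip μ γ r c) (Set.Ici 0) s =
      dissip μ γ r c s * (logDer₁ γ r c s + logDer γ r c s ^ 2) := fun s hs =>
    iteratedDerivWithin_succ_of_forall
      (g' := fun s => dissip μ γ r c s * (logDer₁ γ r c s + logDer γ r c s ^ 2)) e1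
      (fun s hs => ((hasDerivAt_dissip hc hs).mul (hasDerivAt_logDer hc hs)).congr_deriv
        (by ring)) hs
  have e3 : ∀ s, 0 ≤ s → iteratedDerivWithin 3 (dissip μ γ r c) (Set.Ici 0) s =
      dissip μ γ r c s *
        (logDer₂ γ r c s + 3 * logDer γ r c s * logDer₁ γ r c s + logDer γ r c s ^ 3) :=
    fun s hs => iteratedDerivWithin_succ_of_forall
      (g' := fun s => dissip μ γ r c s *
        (logDer₂ γ r c s + 3 * logDer γ r c s * logDer₁ γ r c s + logDer γ r c s ^ 3)) e2
      (fun s hs => ((hasDerivAt_dissip hc hs).mul ((hasDerivAt_logDer₁ hc hs).add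
        ((hasDerivAt_logDer hc hs).pow 2))).congr_deriv
          (by simp only [Pi.add_apply, Pi.pow_apply]; push_cast; ring)) hs
  -- `M` dominates the numerators in the bounds for `w`, `w'` and `w''` simultaneously.
  set M : ℝ := 2 * |r| + γ * 7 with hM
  have hr := abs_nonneg r
  have hM0 : 0 < M := by positivity
  refine ⟨M + 3 * M ^ 2 + M ^ 3, by positivity, ?_⟩
  intro k hk t ht
  have hu : 0 < 1 + t := by linarith
  have hb := dissip_pos (γ := γ) (r := r) hμ hc ht
  have b0 : |logDer γ r c t| ≤ M / (1 + t) :=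
    (abs_logDer_le hγ hc hl ht).trans (by gcongr; linarith)
  have b1 : |logDer₁ γ r c t| ≤ M / (1 + t) ^ 2 :=
    (abs_logDer₁_le hγ hc hl ht).trans (by gcongr; linarith)
  have b2 : |logDer₂ γ r c t| ≤ M / (1 + t) ^ 3 := abs_logDer₂_le hγ hc hl ht
  have key : ∀ {z N : ℝ} {n : ℕ}, |z| ≤ N / (1 + t) ^ n → N ≤ M + 3 * M ^ 2 + M ^ 3 →
      |dissip μ γ r c t * z| ≤ (M + 3 * M ^ 2 + M ^ 3) * dissip μ γ r c t / (1 + t) ^ n := by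
    intro z N n hz hN
    rw [abs_mul, abs_of_pos hb, mul_comm _ (dissip μ γ r c t), mul_div_assoc]
    gcongr
    exact hz.trans (by gcongr)
  have hM2 : 0 < M ^ 2 := by positivity
  have hM3 : 0 < M ^ 3 := by positivity
  rcases hk with rfl | rfl | rfl
  · rw [e1 t ht]
    exact key (N := M) (by simpa using b0) (by linarith)
  · rw [e2 t ht]
    refine key (N := M + M ^ 2) ?_ (by linarith)
    calc |logDer₁ γ r c t + logDer γ r c t ^ 2|
        ≤ |logDer₁ γ r c t| + |logDer γ r c t| ^ 2 := by
          rw [← abs_pow]; exact abs_add_le _ _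
      _ ≤ M / (1 + t) ^ 2 + (M / (1 + t)) ^ 2 := by gcongr
      _ = (M + M ^ 2) / (1 + t) ^ 2 := by field_simp
  · rw [e3 t ht]
    refine key (N := M + 3 * M ^ 2 + M ^ 3) ?_ le_rfl
    calc |logDer₂ γ r c t + 3 * logDer γ r c t * logDer₁ γ r c t + logDer γ r c t ^ 3|
        ≤ |logDer₂ γ r c t| + 3 * |logDer γ r c t| * |logDer₁ γ r c t|
            + |logDer γ r c t| ^ 3 := by
          refine (abs_add_three _ _ _).trans (le_of_eq ?_)
          rw [abs_mul, abs_mul, abs_pow, abs_of_pos (by norm_num : (0 : ℝ) < 3)]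
      _ ≤ M / (1 + t) ^ 3 + 3 * (M / (1 + t)) * (M / (1 + t) ^ 2) + (M / (1 + t)) ^ 3 := by
          gcongr
      _ = (M + 3 * M ^ 2 + M ^ 3) / (1 + t) ^ 3 := by field_simp

lemma contDiffOn_dissip (hc : 1 < c) : ContDiffOn ℝ 3 (dissip μ γ r c) (Set.Ici 0) := by
  intro t ht
  have ht' : (0 : ℝ) ≤ t := ht
  have hL : 0 < Real.log (c + t) := Real.log_pos (by linarith)
  have hu : 0 < 1 + t := by linarith
  have hx : 0 < c + t := by linarith
  have h1 : ContDiffAt ℝ 3 (fun s : ℝ => 1 + s) t := by fun_prop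
  have h2 : ContDiffAt ℝ 3 (fun s : ℝ => c + s) t := by fun_prop
  exact ((contDiffAt_const.mul (h1.rpow_const_of_ne hu.ne')).mul
    ((h2.log hx.ne').rpow_const_of_ne hL.ne')).contDiffWithinAt

/-! ### Consequences of the sign and size of the logarithmic derivative -/

/-- The logarithmic contribution to the logarithmic derivative is `≤ δ / (1 + t)` when
`γ ≤ δ log c`. -/
lemma div_mul_log_le {δ : ℝ} (hδ : 0 ≤ δ) (hc : 1 < c) (h : γ ≤ δ * Real.log c)
    (ht : 0 ≤ t) : γ / ((c + t) * Real.log (c + t)) ≤ δ / (1 + t) := by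
  have hL : 0 < Real.log (c + t) := Real.log_pos (by linarith)
  have hu : 0 < 1 + t := by linarith
  have hx : 0 < c + t := by linarith
  have hm : Real.log c ≤ Real.log (c + t) := Real.log_le_log (by linarith) (by linarith)
  rw [div_le_div_iff₀ (by positivity) hu]
  calc γ * (1 + t) ≤ δ * Real.log (c + t) * (1 + t) := by
        gcongr; exact h.trans (by gcongr)
    _ ≤ δ * Real.log (c + t) * (c + t) := by gcongr
    _ = δ * ((c + t) * Real.log (c + t)) := by ring

lemma monotoneOn_or_antitoneOn_dissip (hμ : 0 < μ) (hγ : 0 < γ) (hc : 1 < c)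
    (h : 0 < r → γ ≤ r * Real.log c) :
    MonotoneOn (dissip μ γ r c) (Set.Ici 0) ∨ AntitoneOn (dissip μ γ r c) (Set.Ici 0) := by
  have hcont : ContinuousOn (dissip μ γ r c) (Set.Ici 0) := fun t ht =>
    (hasDerivAt_dissip hc ht).continuousAt.continuousWithinAt
  have hder : ∀ t ∈ interior (Set.Ici (0 : ℝ)), HasDerivWithinAt (dissip μ γ r c)
      (dissip μ γ r c t * logDer γ r c t) (interior (Set.Ici 0)) t := fun t ht =>
    (hasDerivAt_dissip hc (interior_subset ht : t ∈ Set.Ici (0 : ℝ))).hasDerivWithinAt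
  rcases le_or_gt r 0 with hr | hr
  · left
    refine monotoneOn_of_hasDerivWithinAt_nonneg (convex_Ici 0) hcont hder fun t ht => ?_
    have ht' : (0 : ℝ) ≤ t := (interior_subset ht : t ∈ Set.Ici (0 : ℝ))
    have hL : 0 < Real.log (c + t) := Real.log_pos (by linarith)
    have hx : 0 < c + t := by linarith
    have h1 : 0 ≤ -r / (1 + t) := div_nonneg (by linarith) (by linarith)
    refine mul_nonneg (dissip_pos hμ hc ht').le (add_nonneg h1 (by positivity))
  · right
    refine antitoneOn_of_hasDerivWithinAt_nonpos (convex_Ici 0) hcont hder fun t ht => ?_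
    have ht' : (0 : ℝ) ≤ t := (interior_subset ht : t ∈ Set.Ici (0 : ℝ))
    refine mul_nonpos_of_nonneg_of_nonpos (dissip_pos hμ hc ht').le ?_
    have := div_mul_log_le hr.le hc (h hr) ht'
    unfold logDer
    rw [neg_div]
    linarith

lemma mul_derivWithin_dissip_le (hμ : 0 < μ) (hc : 1 < c) (hr : |r| < 1)
    (h : γ ≤ (1 - |r|) / 2 * Real.log c) (ht : 0 ≤ t) :
    t * derivWithin (dissip μ γ r c) (Set.Ici 0) t ≤ (1 + |r|) / 2 * dissip μ γ r c t := by
  rw [derivWithin_of_forall (fun s hs => hasDerivAt_dissip hc hs) ht]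
  have hb := dissip_pos (γ := γ) (r := r) hμ hc ht
  have hu : 0 < 1 + t := by linarith
  have hw : logDer γ r c t ≤ (1 + |r|) / 2 / (1 + t) := by
    have h1 := div_mul_log_le (by linarith) hc h ht
    have h2 : -r / (1 + t) ≤ |r| / (1 + t) := by gcongr; exact neg_le_abs r
    calc logDer γ r c t ≤ |r| / (1 + t) + (1 - |r|) / 2 / (1 + t) := add_le_add h2 h1
      _ = _ := by ring
  have htw : t * logDer γ r c t ≤ (1 + |r|) / 2 := by
    calc t * logDer γ r c t ≤ t * ((1 + |r|) / 2 / (1 + t)) := by gcongr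
      _ = (1 + |r|) / 2 * (t / (1 + t)) := by ring
      _ ≤ (1 + |r|) / 2 * 1 := by
        gcongr
        rw [div_le_one hu]; linarith
      _ = _ := mul_one _
  calc t * (dissip μ γ r c t * logDer γ r c t) = t * logDer γ r c t * dissip μ γ r c t := by ring
    _ ≤ _ := by gcongr

/-! ### Growth and integrability -/

lemma le_dissip (hμ : 0 < μ) (hγ : 0 < γ) (hc : 1 < c) (hl : 1 ≤ Real.log c) (ht : 0 ≤ t) :
    μ * (1 + t) ^ (-r) ≤ dissip μ γ r c t := by
  have hu : 0 < 1 + t := by linarith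
  exact le_mul_of_one_le_right (by positivity)
    (Real.one_le_rpow (one_le_log_add hc hl ht) hγ.le)

/-- Logarithms grow slower than powers, so `b(t) = O(1 + t)` as soon as `r > -1`. -/
lemma exists_dissip_le (hμ : 0 < μ) (hγ : 0 < γ) (hr : -1 < r) (hc : 1 < c) :
    ∃ K > 0, ∀ t, 0 ≤ t → dissip μ γ r c t ≤ K * (1 + t) := by
  have hε : 0 < (r + 1) / γ := div_pos (by linarith) hγ
  refine ⟨μ * (c ^ (r + 1) / ((r + 1) / γ) ^ γ), by positivity, fun t ht => ?_⟩
  have hu : 0 < 1 + t := by linarith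
  have hL : 0 < Real.log (c + t) := Real.log_pos (by linarith)
  have h1 : Real.log (c + t) ≤ (c * (1 + t)) ^ ((r + 1) / γ) / ((r + 1) / γ) :=
    (Real.log_le_log (by linarith) (by nlinarith)).trans
      (Real.log_le_rpow_div (by positivity) hε)
  have h2 : Real.log (c + t) ^ γ ≤
      c ^ (r + 1) * (1 + t) ^ (r + 1) / ((r + 1) / γ) ^ γ := by
    refine (Real.rpow_le_rpow hL.le h1 hγ.le).trans (le_of_eq ?_)
    rw [Real.div_rpow (by positivity) hε.le, ← Real.rpow_mul (by positivity),
      div_mul_cancel₀ _ hγ.ne', Real.mul_rpow (by linarith) hu.le]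
  have h3 : (1 + t) ^ (-r) * (1 + t) ^ (r + 1) = 1 + t := by
    rw [← Real.rpow_add hu]
    simp
  calc dissip μ γ r c t
      ≤ μ * (1 + t) ^ (-r) * (c ^ (r + 1) * (1 + t) ^ (r + 1) / ((r + 1) / γ) ^ γ) := by
        unfold dissip; gcongr
    _ = μ * (c ^ (r + 1) / ((r + 1) / γ) ^ γ) * ((1 + t) ^ (-r) * (1 + t) ^ (r + 1)) := by ring
    _ = _ := by rw [h3]

lemma tendsto_mul_dissip (hμ : 0 < μ) (hγ : 0 < γ) (hr : r < 1) (hc : 1 < c)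
    (hl : 1 ≤ Real.log c) : Tendsto (fun t => t * dissip μ γ r c t) atTop atTop := by
  have h1 : Tendsto (fun t : ℝ => μ / 2 * (1 + t) ^ (1 - r)) atTop atTop :=
    ((tendsto_rpow_atTop (by linarith)).comp (tendsto_atTop_add_const_left _ 1 tendsto_id)
      ).const_mul_atTop (by positivity)
  refine tendsto_atTop_mono' _ ?_ h1
  filter_upwards [eventually_ge_atTop 1] with t ht
  have hu : 0 < 1 + t := by linarith
  have e : (1 + t) ^ (1 - r) = (1 + t) * (1 + t) ^ (-r) := by
    rw [sub_eq_add_neg, Real.rpow_add hu, Real.rpow_one]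
  calc μ / 2 * (1 + t) ^ (1 - r) = (1 + t) / 2 * (μ * (1 + t) ^ (-r)) := by rw [e]; ring
    _ ≤ t * dissip μ γ r c t := by
      gcongr
      · linarith
      · exact le_dissip hμ hγ hc hl (by linarith)

lemma continuousOn_dissip (hc : 1 < c) : ContinuousOn (dissip μ γ r c) (Set.Ioi 0) :=
  fun _ ht => (hasDerivAt_dissip hc (le_of_lt ht)).continuousAt.continuousWithinAt

lemma integrableOn_inv_sq_mul_dissip (hμ : 0 < μ) (hγ : 0 < γ) (hr : r < 1) (hc : 1 < c)
    (hl : 1 ≤ Real.log c) :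
    IntegrableOn (fun t => ((1 + t) ^ 2 * dissip μ γ r c t)⁻¹) (Set.Ioi 0) := by
  have h1 : IntegrableOn (fun t : ℝ => μ⁻¹ * (t + 1) ^ (r - 2)) (Set.Ioi 0) :=
    (integrableOn_add_rpow_Ioi_of_lt (by linarith) (by norm_num)).const_mul _
  refine Integrable.mono' h1 (ContinuousOn.aestronglyMeasurable ?_ measurableSet_Ioi) ?_
  · refine ContinuousOn.inv₀ (ContinuousOn.mul (by fun_prop) (continuousOn_dissip hc)) ?_
    intro t ht
    have ht' : (0 : ℝ) < t := ht
    have := dissip_pos (γ := γ) (r := r) hμ hc ht'.le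
    positivity
  · refine (ae_restrict_iff' measurableSet_Ioi).2 (ae_of_all _ fun t ht => ?_)
    have ht' : (0 : ℝ) < t := ht
    have hu : 0 < 1 + t := by linarith
    have hb := dissip_pos (γ := γ) (r := r) hμ hc ht'.le
    rw [Real.norm_of_nonneg (by positivity)]
    have e : μ⁻¹ * (t + 1) ^ (r - 2) = ((1 + t) ^ 2 * (μ * (1 + t) ^ (-r)))⁻¹ := by
      rw [add_comm t 1, Real.rpow_sub hu, Real.rpow_neg hu.le, Real.rpow_two]
      field_simp
    rw [e]
    gcongr
    exact le_dissip hμ hγ hc hl ht'.le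

lemma not_integrableOn_one_div_dissip (hμ : 0 < μ) (hγ : 0 < γ) (hr : -1 < r) (hc : 1 < c) :
    ¬ IntegrableOn (fun t => 1 / dissip μ γ r c t) (Set.Ioi 0) := by
  intro hint
  obtain ⟨K, hK, hb⟩ := exists_dissip_le (γ := γ) hμ hγ hr hc
  -- On `(1, ∞)` one has `1 / t ≤ 2 K / b(t)`, whereas `1 / t` is not integrable there.
  refine not_integrableOn_Ioi_inv (a := (1 : ℝ)) ?_
  refine Integrable.mono' ((hint.mono_set (Set.Ioi_subset_Ioi zero_le_one)).const_mul (2 * K))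
    measurable_inv.aestronglyMeasurable ?_
  refine (ae_restrict_iff' measurableSet_Ioi).2 (ae_of_all _ fun t ht => ?_)
  have ht' : (1 : ℝ) < t := ht
  have hbt := dissip_pos (γ := γ) (r := r) (t := t) hμ hc (by linarith)
  have h := hb t (by linarith)
  rw [Real.norm_of_nonneg (by positivity), inv_eq_one_div, mul_one_div,
    div_le_div_iff₀ (by linarith) hbt]
  nlinarith

end Dissip

/-! ### The choice of `c₀` -/

/-- For `μ > 0`, `γ > 0`, `r ∈ (−1,1)`, there is `c₀ > 1` such that for all `c ≥ c₀` the
function `b(t) = μ (1+t)^{−r} (log(c+t))^γ` is an effective dissipation coefficient. -/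
theorem stmt7 (μ γ r : ℝ) (hμ : 0 < μ) (hγ : 0 < γ) (hr₁ : -1 < r) (hr₂ : r < 1) :
    ∃ c₀ : ℝ, 1 < c₀ ∧ ∀ c : ℝ, c₀ ≤ c →
      EffectiveDissipation (fun t => μ * (1 + t) ^ (-r) * Real.log (c + t) ^ γ) := by
  have hr : |r| < 1 := abs_lt.2 ⟨hr₁, hr₂⟩
  have hr' : 0 < 1 - |r| := by linarith
  have hA : 0 ≤ γ / ((1 - |r|) / 2) := by positivity
  have hB : 0 ≤ γ / |r| := by positivity
  -- For `r = 0` the last summand is `γ / 0 = 0`; no lower bound on `log c` is needed from it then.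
  refine ⟨Real.exp (1 + γ / ((1 - |r|) / 2) + γ / |r|), ?_, fun c hc => ?_⟩
  · rw [Real.one_lt_exp_iff]; linarith
  have hc1 : 1 < c := lt_of_lt_of_le (by rw [Real.one_lt_exp_iff]; linarith) hc
  have hlog : 1 + γ / ((1 - |r|) / 2) + γ / |r| ≤ Real.log c :=
    (Real.le_log_iff_exp_le (by linarith)).2 hc
  have hl : 1 ≤ Real.log c := by linarith
  have h1 : γ ≤ (1 - |r|) / 2 * Real.log c := by
    rw [← div_le_iff₀' (by positivity)]; linarith
  have h2 : 0 < r → γ ≤ r * Real.log c := fun h => by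
    rw [abs_of_pos h] at hlog hA hB
    rw [← div_le_iff₀' h]; linarith
  exact ⟨fun t ht => dissip_pos hμ hc1 ht, monotoneOn_or_antitoneOn_dissip hμ hγ hc1 h2,
    tendsto_mul_dissip hμ hγ hr₂ hc1 hl, integrableOn_inv_sq_mul_dissip hμ hγ hr₂ hc1 hl,
    contDiffOn_dissip hc1, abs_iteratedDerivWithin_dissip_le hμ hγ hc1 hl,
    not_integrableOn_one_div_dissip hμ hγ hr₁ hc1,
    (1 + |r|) / 2, by positivity, by linarith,
    fun t ht => mul_derivWithin_dissip_le hμ hc1 hr h1 ht⟩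
end
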